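/- Let V be a finite set, G a finite simple graph on V with a nonempty edge set E, and Φ : V → ℝ. Define F : ℝ → ℝ by F(x) = ∫_{−∞}^x arctan(eᵘ) du, and define S : (V → ℝ) → ℝ by S(ρ) = Σ_{{j,k}∈E} [F(ρ_k − ρ_j) + F(ρ_j − ρ_k) − F(ρ_j + ρ_k) − F(−ρ_j − ρ_k) − π(ρ_j + ρ_k)] + Σ_{j∈V} Φ(j) ρ_j. Then for every ρ : V → ℝ, the second derivative of t ↦ S(ρ + t·w) at t = 0 in the all-ones direction w ≡ 1 equals −Σ_{{j,k}∈E} 4/cosh(ρ_j + ρ_k), which is strictly negative; in particular, S is not convex. -/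

import Mathlib

/-!
Up to a linear term, an edge `{j, k}` contributes the even function `F(x) + F(-x)` at `ρ_k - ρ_j`
minus its value at `ρ_j + ρ_k`, and the second derivative of this function is `1 / cosh x`.
Hence `S` has second derivative
`∑ ((w_k - w_j)² / cosh (ρ_k - ρ_j) - (w_j + w_k)² / cosh (ρ_j + ρ_k))` along `w`.
The constant direction annihilates the nonnegative part and leaves `-4 / cosh (ρ_j + ρ_k)` per edge,
whereas a convex function has nonnegative second derivative along every line.
-/

open MeasureTheory

/-- `F(x) = ∫_{−∞}^x arctan(eᵘ) du` (equal to `Im Li₂(i eˣ)`). -/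
noncomputable def Fint (x : ℝ) : ℝ := ∫ u in Set.Iio x, Real.arctan (Real.exp u)

/-- The variational functional `S` for orthogonal circle patterns in the sphere. -/
noncomputable def circlePatternFunctional {V : Type*} [Fintype V] [DecidableEq V]
    (G : SimpleGraph V) [DecidableRel G.Adj] (Φ : V → ℝ) (ρ : V → ℝ) : ℝ :=
  (∑ e ∈ G.edgeFinset,
    Sym2.lift ⟨fun j k =>
      Fint (ρ k - ρ j) + Fint (ρ j - ρ k) - Fint (ρ j + ρ k) - Fint (-ρ j - ρ k)
        - Real.pi * (ρ j + ρ k),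
      fun j k => by ring_nf⟩ e)
  + ∑ j, Φ j * ρ j

open Set Filter Topology

theorem hasDerivAt_integral_Iio {E : Type*} [NormedAddCommGroup E] [NormedSpace ℝ E]
    [CompleteSpace E] {f : ℝ → E} {x b : ℝ} (hf : IntegrableOn f (Iio b)) (hxb : x < b)
    (hc : ContinuousAt f x) :
    HasDerivAt (fun y => ∫ u in Iio y, f u) (f x) x := by
  have hmeas : StronglyMeasurableAtFilter f (𝓝 x) :=
    ⟨Iio b, Iio_mem_nhds hxb, hf.aestronglyMeasurable⟩
  have hftc : HasDerivAt (fun y => (∫ u in Iio x, f u) + ∫ u in x..y, f u) (f x) x :=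
    (intervalIntegral.integral_hasDerivAt_right .refl hmeas hc).const_add _
  refine hftc.congr_of_eventuallyEq ?_
  filter_upwards [Iio_mem_nhds hxb] with y hyb
  rw [← intervalIntegral.integral_Iio_sub_Iio' (hf.mono_set (Iio_subset_Iio (le_of_lt hyb)))
    (hf.mono_set (Iio_subset_Iio hxb.le)), add_sub_cancel]

theorem deriv_deriv_nonneg_of_convexOn {g : ℝ → ℝ} (hg : ConvexOn ℝ univ g)
    (hd : Differentiable ℝ g) (t : ℝ) : 0 ≤ deriv (deriv g) t :=
  (monotoneOn_univ.1 (hg.monotoneOn_deriv fun x _ => hd x)).deriv_nonneg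

theorem convexOn_comp_line {E : Type*} [AddCommGroup E] [Module ℝ E] {f : E → ℝ}
    (hf : ConvexOn ℝ univ f) (x v : E) : ConvexOn ℝ univ fun t : ℝ => f (x + t • v) := by
  refine (hf.comp_affineMap (AffineMap.lineMap x (x + v))).congr fun t _ => ?_
  simp only [Function.comp_apply, AffineMap.lineMap_apply, vsub_eq_sub, vadd_eq_add,
    add_sub_cancel_left, add_comm]

theorem arctan_le_self {x : ℝ} (hx : 0 ≤ x) : Real.arctan x ≤ x := by
  simpa only [Real.tan_arctan] using
    Real.le_tan (Real.arctan_nonneg.2 hx) (Real.arctan_lt_pi_div_two x)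

theorem continuous_arctan_exp : Continuous fun u : ℝ => Real.arctan (Real.exp u) :=
  Real.continuous_arctan.comp Real.continuous_exp

theorem integrableOn_arctan_exp_Iic (a : ℝ) :
    IntegrableOn (fun u : ℝ => Real.arctan (Real.exp u)) (Iic a) := by
  refine (integrableOn_exp_Iic a).mono' continuous_arctan_exp.aestronglyMeasurable
    (Eventually.of_forall fun u => ?_)
  rw [Real.norm_of_nonneg (Real.arctan_nonneg.2 (Real.exp_pos u).le)]
  exact arctan_le_self (Real.exp_pos u).le

theorem hasDerivAt_Fint (x : ℝ) : HasDerivAt Fint (Real.arctan (Real.exp x)) x :=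
  hasDerivAt_integral_Iio ((integrableOn_arctan_exp_Iic (x + 1)).mono_set Iio_subset_Iic_self)
    (lt_add_one x) continuous_arctan_exp.continuousAt

theorem hasDerivAt_arctan_exp (x : ℝ) :
    HasDerivAt (fun u : ℝ => Real.arctan (Real.exp u)) (1 / (2 * Real.cosh x)) x := by
  refine (Real.hasDerivAt_exp x).arctan.congr_deriv ?_
  have hexp : Real.exp x ≠ 0 := Real.exp_ne_zero x
  rw [Real.cosh_eq, Real.exp_neg]
  field_simp
  ring

/-- The even function `F(x) + F(-x)`, through which `F` enters the circle pattern functional. -/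
noncomputable def symmFint (x : ℝ) : ℝ := Fint x + Fint (-x)

/-- The Gudermannian function, the odd primitive of `1 / cosh`, in the form in which it arises as
the derivative of `symmFint`. -/
noncomputable def gudermannian (x : ℝ) : ℝ :=
  Real.arctan (Real.exp x) - Real.arctan (Real.exp (-x))

theorem gudermannian_neg (x : ℝ) : gudermannian (-x) = -gudermannian x := by
  simp only [gudermannian, neg_neg, neg_sub]

theorem hasDerivAt_symmFint (x : ℝ) : HasDerivAt symmFint (gudermannian x) x :=
  ((hasDerivAt_Fint x).add ((hasDerivAt_Fint (-x)).comp x (hasDerivAt_neg x))).congr_deriv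
    (by rw [gudermannian]; ring)

theorem hasDerivAt_gudermannian (x : ℝ) : HasDerivAt gudermannian (1 / Real.cosh x) x := by
  refine ((hasDerivAt_arctan_exp x).sub
    ((hasDerivAt_arctan_exp (-x)).comp x (hasDerivAt_neg x))).congr_deriv ?_
  rw [Real.cosh_neg]
  ring

section EdgeTerms

variable {V : Type*}

/-- The contribution of the edge `{j, k}` to the circle pattern functional. -/
noncomputable def edgeTerm (ρ : V → ℝ) : Sym2 V → ℝ :=
  Sym2.lift ⟨fun j k => symmFint (ρ k - ρ j) - symmFint (ρ j + ρ k) - Real.pi * (ρ j + ρ k),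
    fun j k => by simp only [symmFint, neg_sub, add_comm]⟩

/-- The first derivative of `edgeTerm` at `ρ` in the direction `w`. -/
noncomputable def edgeDeriv (ρ w : V → ℝ) : Sym2 V → ℝ :=
  Sym2.lift ⟨fun j k => gudermannian (ρ k - ρ j) * (w k - w j)
      - gudermannian (ρ j + ρ k) * (w j + w k) - Real.pi * (w j + w k),
    fun j k => by
      beta_reduce
      rw [← neg_sub (ρ k) (ρ j), gudermannian_neg, add_comm (ρ k), add_comm (w k)]
      ring⟩

/-- The second derivative of `edgeTerm` at `ρ` in the direction `w`. -/
noncomputable def edgeSecondDeriv (ρ w : V → ℝ) : Sym2 V → ℝ :=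
  Sym2.lift ⟨fun j k => (w k - w j) ^ 2 / Real.cosh (ρ k - ρ j)
      - (w j + w k) ^ 2 / Real.cosh (ρ j + ρ k),
    fun j k => by
      beta_reduce
      rw [← neg_sub (ρ k) (ρ j), Real.cosh_neg, add_comm (ρ k), add_comm (w k)]
      ring⟩

theorem hasDerivAt_line_apply (ρ w : V → ℝ) (i : V) (t : ℝ) :
    HasDerivAt (fun t : ℝ => (ρ + t • w) i) (w i) t := by
  simpa using ((hasDerivAt_id t).mul_const (w i)).const_add (ρ i)

theorem hasDerivAt_edgeTerm_line (ρ w : V → ℝ) (e : Sym2 V) (t : ℝ) :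
    HasDerivAt (fun t : ℝ => edgeTerm (ρ + t • w) e) (edgeDeriv (ρ + t • w) w e) t := by
  induction e using Sym2.ind with
  | _ j k =>
    have hdiff := (hasDerivAt_line_apply ρ w k t).fun_sub (hasDerivAt_line_apply ρ w j t)
    have hsum := (hasDerivAt_line_apply ρ w j t).fun_add (hasDerivAt_line_apply ρ w k t)
    exact (((hasDerivAt_symmFint _).comp t hdiff).sub
      ((hasDerivAt_symmFint _).comp t hsum)).sub (hsum.const_mul Real.pi)

theorem hasDerivAt_edgeDeriv_line (ρ w : V → ℝ) (e : Sym2 V) (t : ℝ) :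
    HasDerivAt (fun t : ℝ => edgeDeriv (ρ + t • w) w e) (edgeSecondDeriv (ρ + t • w) w e) t := by
  induction e using Sym2.ind with
  | _ j k =>
    have hdiff := (hasDerivAt_line_apply ρ w k t).fun_sub (hasDerivAt_line_apply ρ w j t)
    have hsum := (hasDerivAt_line_apply ρ w j t).fun_add (hasDerivAt_line_apply ρ w k t)
    refine (((((hasDerivAt_gudermannian _).comp t hdiff).mul_const (w k - w j)).sub
      (((hasDerivAt_gudermannian _).comp t hsum).mul_const (w j + w k))).sub_const
        (Real.pi * (w j + w k))).congr_deriv ?_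
    simp only [edgeSecondDeriv, Sym2.lift_mk]
    ring

theorem edgeSecondDeriv_one (ρ : V → ℝ) (e : Sym2 V) :
    edgeSecondDeriv ρ 1 e =
      -Sym2.lift ⟨fun j k => 4 / Real.cosh (ρ j + ρ k), fun j k => by simp only [add_comm]⟩ e := by
  induction e using Sym2.ind with
  | _ j k =>
    simp only [edgeSecondDeriv, Sym2.lift_mk, Pi.one_apply]
    ring

theorem edgeSecondDeriv_one_neg (ρ : V → ℝ) (e : Sym2 V) : edgeSecondDeriv ρ 1 e < 0 := by
  rw [edgeSecondDeriv_one, neg_lt_zero]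
  induction e using Sym2.ind with
  | _ j k => exact div_pos four_pos (Real.cosh_pos _)

end EdgeTerms

section Functional

variable {V : Type*} [Fintype V] [DecidableEq V] (G : SimpleGraph V) [DecidableRel G.Adj]
  (Φ ρ w : V → ℝ)

theorem circlePatternFunctional_eq_sum_edgeTerm :
    circlePatternFunctional G Φ ρ = ∑ e ∈ G.edgeFinset, edgeTerm ρ e + ∑ j, Φ j * ρ j := by
  refine congrArg (· + _) (Finset.sum_congr rfl fun e _ => ?_)
  induction e using Sym2.ind with
  | _ j k =>
    simp only [edgeTerm, symmFint, Sym2.lift_mk, neg_sub, neg_add']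
    ring

theorem hasDerivAt_circlePatternFunctional_line (t : ℝ) :
    HasDerivAt (fun t : ℝ => circlePatternFunctional G Φ (ρ + t • w))
      (∑ e ∈ G.edgeFinset, edgeDeriv (ρ + t • w) w e + ∑ j, Φ j * w j) t := by
  simp only [circlePatternFunctional_eq_sum_edgeTerm]
  exact (HasDerivAt.fun_sum fun e _ => hasDerivAt_edgeTerm_line ρ w e t).add
    (HasDerivAt.fun_sum fun j _ => (hasDerivAt_line_apply ρ w j t).const_mul (Φ j))

theorem deriv_deriv_circlePatternFunctional_line (t : ℝ) :
    deriv (deriv fun t : ℝ => circlePatternFunctional G Φ (ρ + t • w)) t =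
      ∑ e ∈ G.edgeFinset, edgeSecondDeriv (ρ + t • w) w e := by
  rw [funext fun t => (hasDerivAt_circlePatternFunctional_line G Φ ρ w t).deriv]
  exact ((HasDerivAt.fun_sum fun e _ => hasDerivAt_edgeDeriv_line ρ w e t).add_const _).deriv

end Functional

/-- **The spherical circle pattern functional is not convex.**
If the edge set is nonempty, then for every `ρ` the second derivative of
`t ↦ S(ρ + t·𝟙)` at `t = 0` in the all-ones direction equals
`−∑_{{j,k} ∈ E} 4/cosh(ρ_j + ρ_k)`, which is strictly negative; in
particular, `S` is not convex. -/
theorem circlePatternFunctional_not_convex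
    {V : Type*} [Fintype V] [DecidableEq V]
    (G : SimpleGraph V) [DecidableRel G.Adj] (Φ : V → ℝ)
    (hE : G.edgeFinset.Nonempty) (ρ : V → ℝ) :
    deriv (deriv (fun t : ℝ => circlePatternFunctional G Φ (ρ + t • (1 : V → ℝ)))) 0 =
        -∑ e ∈ G.edgeFinset,
          Sym2.lift ⟨fun j k => 4 / Real.cosh (ρ j + ρ k),
            fun j k => by ring_nf⟩ e ∧
      (-∑ e ∈ G.edgeFinset,
          Sym2.lift ⟨fun j k => (4 : ℝ) / Real.cosh (ρ j + ρ k),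
            fun j k => by ring_nf⟩ e) < 0 ∧
      ¬ ConvexOn ℝ Set.univ (circlePatternFunctional G Φ) := by
  have hderiv : deriv (deriv fun t : ℝ => circlePatternFunctional G Φ (ρ + t • (1 : V → ℝ))) 0 =
      ∑ e ∈ G.edgeFinset, edgeSecondDeriv ρ 1 e := by
    rw [deriv_deriv_circlePatternFunctional_line, zero_smul, add_zero]
  have hneg : ∑ e ∈ G.edgeFinset, edgeSecondDeriv ρ 1 e < 0 :=
    Finset.sum_neg (fun e _ => edgeSecondDeriv_one_neg ρ e) hE
  have hdiff : Differentiable ℝ fun t : ℝ => circlePatternFunctional G Φ (ρ + t • (1 : V → ℝ)) :=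
    fun t => (hasDerivAt_circlePatternFunctional_line G Φ ρ 1 t).differentiableAt
  simp only [← Finset.sum_neg_distrib, ← edgeSecondDeriv_one]
  exact ⟨hderiv, hneg, fun hconv => (hderiv.trans_lt hneg).not_ge
    (deriv_deriv_nonneg_of_convexOn (convexOn_comp_line hconv ρ 1) hdiff 0)⟩
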